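/- Let M=(Q,Γ,Δ,q₀,γ₀) be a DCFS, k∈ℕ, F⊆Q, P the stratified-trace PDA constructed from M, k and F, and μ the map sending a configuration c of M with Active(c)=⊥ to the PDA configuration (State(c),⊥) and with Active(c)=(w,i) (w∈Γ∪{ε}, i∈{0,…,k}) to (State(c),(w,i)). For every i∈{0,…,k}, PDA configurations ς,ς', configuration c of M whose active component is ⊥ or has stack content in Γ∪{ε} and switch number in {0,…,k}, and σ_i∈Σ_i*: if ς→*ς' in T(P) via a run labelled σ_i, μ(c)=ς, and Idle(c)((α,i)) ≥ |σ_i|_{(α,i,◁)} for all α∈Γ∪{ε}, then there exists a configuration c' of M such that (1) μ(c')=ς'; (2) c→*c' in T_{{i}}(M); (3) Idle(c')((α,i))=Idle(c)((α,i))−|σ_i|_{(α,i,◁)} and Idle(c')((α,i+1))=Idle(c)((α,i+1))+|σ_i|_{(α,i+1,▷)} for all α∈Γ∪{ε}; (4) Idle(c')((α,j))=Idle(c)((α,j)) for all α∈Γ∪{ε} and j∈{0,…,k+1} with j∉{i,i+1}. -/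

import Mathlib

namespace DCPSFormal

/-- Rules of a dynamic network of concurrent pushdown systems (DCPS):
creation rules `⟨q,γ⟩ → ⟨q',u⟩ ▷ α` (with `α = none` meaning `ε`),
interruption rules `⟨q,γ⟩ ↦ ⟨q',u⟩`, and resumption rules `q ↦ q' ◁ γ`. -/
inductive Rule (Q Γ : Type*) where
  | cr : Q → Γ → Q → List Γ → Option Γ → Rule Q Γ
  | intr : Q → Γ → Q → List Γ → Rule Q Γ
  | res : Q → Γ → Q → Rule Q Γ

/-- A DCPS: a set of rules, an initial state and an initial stack symbol. -/
structure DCPS (Q Γ : Type*) where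
  rules : Set (Rule Q Γ)
  q0 : Q
  γ0 : Γ

/-- Well-formedness of a DCPS: every pushed word has length at most 2. -/
def IsDCPSWf {Q Γ : Type*} (M : DCPS Q Γ) : Prop :=
  ∀ r ∈ M.rules,
    match r with
    | .cr _ _ _ u _ => u.length ≤ 2
    | .intr _ _ _ u => u.length ≤ 2
    | .res _ _ _ => True

/-- A DCFS is a DCPS in which every pushed word has length at most 1. -/
def IsDCFS {Q Γ : Type*} (M : DCPS Q Γ) : Prop :=
  ∀ r ∈ M.rules,
    match r with
    | .cr _ _ _ u _ => u.length ≤ 1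
    | .intr _ _ _ u => u.length ≤ 1
    | .res _ _ _ => True

/-- A configuration of a DCPS: global state, optional active local configuration
(stack content and switch number), and a finitely supported multiset of pending
local configurations. -/
structure Config (Q Γ : Type*) where
  state : Q
  active : Option (List Γ × ℕ)
  idle : (List Γ × ℕ) →₀ ℕ

/-- The thread possibly spawned by a creation rule with creation component `α`
when the active thread has switch number `i`. -/
noncomputable def spawnOf {Γ : Type*} (α : Option Γ) (i : ℕ) : (List Γ × ℕ) →₀ ℕ :=
  match α with
  | none => 0
  | some a => Finsupp.single ([a], i + 1) 1

/-- The transition system `T(M)` of a DCPS, with steps labelled by rules. -/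
inductive Step {Q Γ : Type*} (M : DCPS Q Γ) : Rule Q Γ → Config Q Γ → Config Q Γ → Prop
  | cr {q γ q' u α w i V} :
      Rule.cr q γ q' u α ∈ M.rules →
      Step M (.cr q γ q' u α) ⟨q, some (γ :: w, i), V⟩ ⟨q', some (u ++ w, i), V + spawnOf α i⟩
  | intr {q γ q' u w i V} :
      Rule.intr q γ q' u ∈ M.rules →
      Step M (.intr q γ q' u) ⟨q, some (γ :: w, i), V⟩
        ⟨q', none, V + Finsupp.single (u ++ w, i + 1) 1⟩
  | res {q γ q' w i V} :
      Rule.res q γ q' ∈ M.rules →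
      Step M (.res q γ q') ⟨q, none, V + Finsupp.single (γ :: w, i) 1⟩ ⟨q', some (γ :: w, i), V⟩

/-- `c ∈ Conf_I(M)`: the active thread exists and its switch number lies in `I`. -/
def ActiveIn {Q Γ : Type*} (I : Set ℕ) (c : Config Q Γ) : Prop :=
  ∃ w i, c.active = some (w, i) ∧ i ∈ I

/-- The `I`-bounded transition system `T_I(M)`. -/
def StepIn {Q Γ : Type*} (M : DCPS Q Γ) (I : Set ℕ) (r : Rule Q Γ) (c c' : Config Q Γ) : Prop :=
  Step M r c c' ∧ (ActiveIn I c ∨ ActiveIn I c')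

/-- Reachability in `T(M)`. -/
def Reaches {Q Γ : Type*} (M : DCPS Q Γ) : Config Q Γ → Config Q Γ → Prop :=
  Relation.ReflTransGen (fun a b => ∃ r, Step M r a b)

/-- Reachability in `T_I(M)`. -/
def ReachesIn {Q Γ : Type*} (M : DCPS Q Γ) (I : Set ℕ) : Config Q Γ → Config Q Γ → Prop :=
  Relation.ReflTransGen (fun a b => ∃ r, StepIn M I r a b)

/-- The initial configuration of a DCPS. -/
noncomputable def initConfig {Q Γ : Type*} (M : DCPS Q Γ) : Config Q Γ :=
  ⟨M.q0, none, Finsupp.single ([M.γ0], 0) 1⟩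

/-- `q` is reachable by `M`. -/
def StateReachable {Q Γ : Type*} (M : DCPS Q Γ) (q : Q) : Prop :=
  ∃ c, Reaches M (initConfig M) c ∧ c.active = none ∧ c.state = q

/-- `q` is `k`-bounded reachable by `M`. -/
def KBoundedReachable {Q Γ : Type*} (M : DCPS Q Γ) (k : ℕ) (q : Q) : Prop :=
  ∃ c, ReachesIn M {i | i ≤ k} (initConfig M) c ∧ c.active = none ∧ c.state = q

/-- `q` is `k`-stratified reachable by `M`. -/
def KStratifiedReachable {Q Γ : Type*} (M : DCPS Q Γ) (k : ℕ) (q : Q) : Prop :=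
  ∃ c : ℕ → Config Q Γ, c 0 = initConfig M ∧
    (∀ l ≤ k, ReachesIn M {l} (c l) (c (l + 1))) ∧
    (c (k + 1)).active = none ∧ (c (k + 1)).state = q

/-- A labelled run in a labelled transition system. -/
inductive LRun {C L : Type*} (step : L → C → C → Prop) : List L → C → C → Prop
  | nil (c) : LRun step [] c c
  | cons {l τ c c' c''} : step l c c' → LRun step τ c' c'' → LRun step (l :: τ) c c''

/-- A pushdown automaton with states `S`, input alphabet `A` and stack alphabet `Γ`. -/
structure PDA (S A Γ : Type*) where
  trans : Set ((S × Γ) × Option A × (S × List Γ))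
  p0 : S
  γ0 : Γ
  final : Set S

/-- A single (possibly `ε`-labelled) step of a PDA. -/
inductive PDAStep {S A Γ : Type*} (P : PDA S A Γ) :
    Option A → (S × List Γ) → (S × List Γ) → Prop
  | mk {p γ a p' u w} : ((p, γ), a, (p', u)) ∈ P.trans →
      PDAStep P a (p, γ :: w) (p', u ++ w)

/-- A run of a PDA labelled by the word obtained by concatenating all non-`ε` labels. -/
inductive PDATrace {S A Γ : Type*} (P : PDA S A Γ) :
    List A → (S × List Γ) → (S × List Γ) → Prop
  | nil (c) : PDATrace P [] c c
  | eps {v c c' c''} : PDAStep P none c c' → PDATrace P v c' c'' → PDATrace P v c c''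
  | cons {a v c c' c''} : PDAStep P (some a) c c' → PDATrace P v c' c'' →
      PDATrace P (a :: v) c c''

/-- The language of a PDA (acceptance by final state). -/
def PDALang {S A Γ : Type*} (P : PDA S A Γ) : Set (List A) :=
  { v | ∃ p w, p ∈ P.final ∧ PDATrace P v (P.p0, [P.γ0]) (p, w) }

/-- A finite state automaton. -/
structure FSA (S A : Type*) where
  trans : Set (S × Option A × S)
  init : Set S
  final : Set S

/-- A run of an FSA labelled by a word (`ε`-labels contribute nothing). -/
inductive FSARun {S A : Type*} (Au : FSA S A) : List A → S → S → Prop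
  | nil (s) : FSARun Au [] s s
  | eps {v s s' s''} : (s, none, s') ∈ Au.trans → FSARun Au v s' s'' → FSARun Au v s s''
  | cons {a v s s' s''} : (s, some a, s') ∈ Au.trans → FSARun Au v s' s'' →
      FSARun Au (a :: v) s s''

/-- The language of an FSA. -/
def FSALang {S A : Type*} (Au : FSA S A) : Set (List A) :=
  { v | ∃ s ∈ Au.init, ∃ s' ∈ Au.final, FSARun Au v s s' }

/-- A vector addition system with states of dimension `n`. -/
structure VASS (n : ℕ) (S A : Type*) where
  δ : S → A → S × (Fin n → ℤ)
  s0 : S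
  v0 : Fin n → ℕ

/-- A step of a VASS: `(q₁,u₁) →ᵃ (q₂,u₂)` iff `δ(q₁,a) = (q₂, u₂ - u₁)`. -/
def VStep {n : ℕ} {S A : Type*} (V : VASS n S A) (a : A) :
    (S × (Fin n → ℕ)) → (S × (Fin n → ℕ)) → Prop :=
  fun c c' => (V.δ c.1 a).1 = c'.1 ∧ ∀ i, (c'.2 i : ℤ) = (c.2 i : ℤ) + (V.δ c.1 a).2 i

/-- Reachability in the transition system of a VASS. -/
def VReaches {n : ℕ} {S A : Type*} (V : VASS n S A) :
    (S × (Fin n → ℕ)) → (S × (Fin n → ℕ)) → Prop :=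
  Relation.ReflTransGen (fun c c' => ∃ a, VStep V a c c')

/-- A state `s` is reachable by the VASS `V`. -/
def VStateReachable {n : ℕ} {S A : Type*} (V : VASS n S A) (s : S) : Prop :=
  ∃ u, VReaches V (V.s0, V.v0) (s, u)

/-- The `i`-th unit vector. -/
def unitVec {m : ℕ} (i : Fin m) : Fin m → ℤ := fun j => if j = i then 1 else 0

/-- The three kinds of letters of the stratified-trace PDA: `▷` (spawn/interrupt),
`◁` (resume), and `−` (silent). -/
inductive Dir where
  | spawn : Dir
  | resume : Dir
  | silent : Dir
deriving DecidableEq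

/-- Letters of the stratified-trace PDA: triples over `Γ ∪ {ε}`, a switch number,
and a direction. -/
abbrev Lbl (Γ : Type*) := Option Γ × ℕ × Dir

/-- The sub-alphabet `Σ_i = ((Γ∪{ε})×{i+1}×{▷}) ∪ (Γ×{i}×{◁}) ∪ {(ε,i,−)}`. -/
def SigmaI {Γ : Type*} (i : ℕ) : Set (Lbl Γ) :=
  { l | (∃ α : Option Γ, l = (α, i + 1, Dir.spawn)) ∨
        (∃ γ : Γ, l = (some γ, i, Dir.resume)) ∨ l = (none, i, Dir.silent) }

/-- Stack symbols of the stratified-trace PDA: `⊥` (= `none`) or a pair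
`(w,i)` with `w ∈ Γ ∪ {ε}` and `i` a switch number. -/
abbrev PSym (Γ : Type*) := Option (Option Γ × ℕ)

/-- The transitions of the stratified-trace PDA constructed from a DCFS `M` and `k`
(the pushed word `u` of a DCFS rule, of length at most 1, is represented by `u.head?`). -/
inductive STrans {Q Γ : Type*} (M : DCPS Q Γ) (k : ℕ) :
    ((Q × PSym Γ) × Option (Lbl Γ) × (Q × List (PSym Γ))) → Prop
  | silent {q γ q' u} (i : ℕ) : Rule.cr q γ q' u none ∈ M.rules → i ≤ k →
      STrans M k ((q, some (some γ, i)), some (none, i, Dir.silent), (q', [some (u.head?, i)]))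
  | spawn {q γ q' u a} (i : ℕ) : Rule.cr q γ q' u (some a) ∈ M.rules → i ≤ k →
      STrans M k
        ((q, some (some γ, i)), some (some a, i + 1, Dir.spawn), (q', [some (u.head?, i)]))
  | intr {q γ q' u} (i : ℕ) : Rule.intr q γ q' u ∈ M.rules → i ≤ k →
      STrans M k ((q, some (some γ, i)), some (u.head?, i + 1, Dir.spawn), (q', [none]))
  | res {q γ q'} (i : ℕ) : Rule.res q γ q' ∈ M.rules → i ≤ k →
      STrans M k ((q, none), some (some γ, i, Dir.resume), (q', [some (some γ, i)]))

/-- The stratified-trace PDA constructed from a DCFS `M`, `k ∈ ℕ` and `F ⊆ Q`. -/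
def stratPDA {Q Γ : Type*} (M : DCPS Q Γ) (k : ℕ) (F : Set Q) : PDA Q (Lbl Γ) (PSym Γ) where
  trans := { t | STrans M k t }
  p0 := M.q0
  γ0 := none
  final := F

/-- The simulation map `μ` from configurations of the DCFS `M` (whose active
component is `⊥` or has stack content in `Γ ∪ {ε}`) to configurations of the
stratified-trace PDA. -/
def muP {Q Γ : Type*} (c : Config Q Γ) : Q × List (PSym Γ) :=
  (c.state,
    match c.active with
    | none => [none]
    | some (w, i) => [some (w.head?, i)])

/-- The active component of `c` is `⊥` or has stack content in `Γ ∪ {ε}` and switch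
number in `{0,…,k}`. -/
def GoodActive {Q Γ : Type*} (k : ℕ) (c : Config Q Γ) : Prop :=
  c.active = none ∨ ∃ (w : Option Γ) (i : ℕ), i ≤ k ∧ c.active = some (w.toList, i)

theorem toList_inj_aux {Γ : Type} (a b : Option Γ) : a.toList = b.toList ↔ a = b := by
  cases a <;> cases b <;> simp

theorem head_toList_aux {Γ : Type} (u : List Γ) (h : u.length ≤ 1) : u = u.head?.toList := by
  match u, h with
  | [], _ => rfl
  | [a], _ => rfl

theorem sim_step
    (Q Γ : Type) [DecidableEq Γ]
    (M : DCPS Q Γ) (hdcfs : IsDCFS M)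
    (k : ℕ) (F : Set Q) (i : ℕ)
    (ς ς' : Q × List (PSym Γ)) (c : Config Q Γ) (a : Option (Lbl Γ))
    (hstep : PDAStep (stratPDA M k F) a ς ς')
    (hmu : muP c = ς) (hc : GoodActive k c)
    (hσ : ∀ x ∈ a, x ∈ SigmaI i)
    (hcnt : ∀ α : Option Γ, a = some (α, i, Dir.resume) → 0 < c.idle (α.toList, i)) :
    ∃ (c' : Config Q Γ) (l : Lbl Γ), a = some l ∧
      muP c' = ς' ∧ GoodActive k c' ∧
      (∃ r, StepIn M {i} r c c') ∧
      (∀ (α : Option Γ) (j : ℕ),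
        c'.idle (α.toList, j) + (if l = (α, i, Dir.resume) ∧ j = i then 1 else 0)
        = c.idle (α.toList, j) + (if l = (α, i + 1, Dir.spawn) ∧ j = i + 1 then 1 else 0)) := by
  obtain ⟨q, act, V⟩ := c
  obtain ⟨htr⟩ := hstep
  rename_i p γ p' u w
  simp only [stratPDA, Set.mem_setOf_eq] at htr
  have key : ∀ (γ : Γ) (i' : ℕ), muP (⟨q, act, V⟩ : Config Q Γ) = (p, some (some γ, i') :: w) →
      q = p ∧ act = some ([γ], i') ∧ w = [] := by
    intro γ i' h
    rcases hc with hc | ⟨w', j, hj, hc⟩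
    · simp only at hc
      subst hc
      simp [muP] at h
    · simp only at hc
      subst hc
      cases w' <;> simp [muP] at h
      obtain ⟨rfl, ⟨rfl, rfl⟩, rfl⟩ := h
      simp
  cases htr with
  | @silent _ γ _ u i' hr hi' =>
    obtain ⟨rfl, rfl, rfl⟩ := key γ i' hmu
    have hi : i' = i := by simpa [SigmaI] using hσ
    subst hi
    have hu := head_toList_aux u (hdcfs _ hr)
    refine ⟨⟨p', some (u ++ [], i'), V + spawnOf none i'⟩, _, rfl, ?_, ?_,
      ⟨_, Step.cr hr, Or.inl ⟨_, _, rfl, rfl⟩⟩, ?_⟩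
    · simp [muP]
    · exact Or.inr ⟨u.head?, i', hi', by rw [← hu]; simp⟩
    · intro α j; simp [spawnOf]
  | @spawn _ γ _ u b i' hr hi' =>
    obtain ⟨rfl, rfl, rfl⟩ := key γ i' hmu
    have hi : i' = i := by simpa [SigmaI] using hσ
    subst hi
    have hu := head_toList_aux u (hdcfs _ hr)
    refine ⟨⟨p', some (u ++ [], i'), V + spawnOf (some b) i'⟩, _, rfl, ?_, ?_,
      ⟨_, Step.cr hr, Or.inl ⟨_, _, rfl, rfl⟩⟩, ?_⟩
    · simp [muP]
    · exact Or.inr ⟨u.head?, i', hi', by rw [← hu]; simp⟩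
    · intro α j
      have := toList_inj_aux (some b) α
      simp only [Option.toList_some] at this
      simp [spawnOf, Finsupp.single_apply, this, eq_comm]
  | @intr _ γ _ u i' hr hi' =>
    obtain ⟨rfl, rfl, rfl⟩ := key γ i' hmu
    have hi : i' = i := by simpa [SigmaI] using hσ
    subst hi
    have hu := head_toList_aux u (hdcfs _ hr)
    refine ⟨⟨p', none, V + Finsupp.single (u ++ [], i' + 1) 1⟩, _, rfl, ?_, ?_,
      ⟨_, Step.intr hr, Or.inl ⟨_, _, rfl, rfl⟩⟩, ?_⟩
    · simp [muP]
    · exact Or.inl rfl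
    · intro α j
      have := toList_inj_aux u.head? α
      rw [← hu] at this
      simp [Finsupp.single_apply, this, eq_comm]
  | @res _ γ _ i' hr hi' =>
    have hi : i' = i := by simpa [SigmaI] using hσ
    subst hi
    have hq : q = p ∧ act = none ∧ w = [] := by
      rcases act with _ | ⟨w', j⟩ <;> simp [muP] at hmu
      simp [hmu]
    obtain ⟨rfl, rfl, rfl⟩ := hq
    have hpos : 0 < V ([γ], i') := hcnt (some γ) rfl
    obtain ⟨W, rfl⟩ : ∃ W, V = W + Finsupp.single ([γ], i') 1 := by
      refine ⟨V - Finsupp.single ([γ], i') 1, ?_⟩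
      rw [tsub_add_cancel_of_le]
      rw [Finsupp.single_le_iff]
      exact hpos
    refine ⟨⟨p', some ([γ], i'), W⟩, _, rfl, ?_, ?_,
      ⟨_, Step.res hr, Or.inr ⟨_, _, rfl, rfl⟩⟩, ?_⟩
    · simp [muP]
    · exact Or.inr ⟨some γ, i', hi', rfl⟩
    · intro α j
      have := toList_inj_aux (some γ) α
      simp only [Option.toList_some] at this
      simp [Finsupp.single_apply, this, eq_comm]

/-- Every trace `σ_i ∈ Σ_i*` of the stratified-trace PDA starting
in `μ(c)`, whose `◁`-letter counts are dominated by the pending threads of `c`, is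
simulated by a run of the DCFS `M` in `T_{{i}}(M)` from `c` to a configuration `c'`
with `μ(c') = ς'` whose pending threads are updated according to the letter counts. -/
theorem dcfs_simulates_strat_pda
    (Q Γ : Type) [Fintype Q] [Fintype Γ] [DecidableEq Q] [DecidableEq Γ]
    (M : DCPS Q Γ) (hfin : M.rules.Finite) (hdcfs : IsDCFS M)
    (k : ℕ) (F : Set Q) (i : ℕ) (hik : i ≤ k)
    (ς ς' : Q × List (PSym Γ)) (c : Config Q Γ) (σ : List (Lbl Γ))
    (htrace : PDATrace (stratPDA M k F) σ ς ς')
    (hmu : muP c = ς) (hc : GoodActive k c)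
    (hσ : ∀ x ∈ σ, x ∈ SigmaI i)
    (hcnt : ∀ α : Option Γ, σ.count ((α, i, Dir.resume) : Lbl Γ) ≤ c.idle (α.toList, i)) :
    ∃ c' : Config Q Γ,
      muP c' = ς' ∧
      ReachesIn M {i} c c' ∧
      (∀ α : Option Γ,
        c'.idle (α.toList, i) = c.idle (α.toList, i) - σ.count ((α, i, Dir.resume) : Lbl Γ) ∧
        c'.idle (α.toList, i + 1) =
          c.idle (α.toList, i + 1) + σ.count ((α, i + 1, Dir.spawn) : Lbl Γ)) ∧
      (∀ (α : Option Γ), ∀ j ≤ k + 1, j ≠ i → j ≠ i + 1 →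
        c'.idle (α.toList, j) = c.idle (α.toList, j)) := by
  induction htrace generalizing c with
  | nil _ =>
    exact ⟨c, hmu, Relation.ReflTransGen.refl, by simp, by simp⟩
  | eps hs _ _ =>
    obtain ⟨_, _, h, _⟩ := sim_step Q Γ M hdcfs k F i _ _ c _ hs hmu hc (by simp) (by simp)
    cases h
  | @cons a v _ _ _ hs _ ih =>
    obtain ⟨c1, l, hl, hmu1, hc1, hst, hid⟩ := sim_step Q Γ M hdcfs k F i _ _ c _ hs hmu hc
      (by intro x hx; cases hx; exact hσ _ (by simp))
      (by
        intro α h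
        cases h
        have := hcnt α
        simp at this
        omega)
    cases hl
    obtain ⟨c2, hmu2, hr2, h3, h4⟩ := ih c1 hmu1 hc1 (fun x hx => hσ x (by simp [hx])) (by
      intro α
      have h1 := hcnt α
      have h2 := hid α i
      simp only [List.count_cons, beq_iff_eq] at h1
      simp at h2
      omega)
    refine ⟨c2, hmu2, Relation.ReflTransGen.head hst hr2, ?_, ?_⟩
    · intro α
      have h1 := hid α i
      have h2 := hid α (i + 1)
      obtain ⟨h5, h6⟩ := h3 α
      simp at h1 h2
      simp only [List.count_cons, beq_iff_eq]
      constructor <;> omega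
    · intro α j hj hji hji1
      have h1 := hid α j
      rw [h4 α j hj hji hji1]
      simpa [hji, hji1] using h1


end DCPSFormal
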